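/- non(Sfin(B_Ω,B_T)) = non(Sfin(Ω,T)) = 𝔭; that is, the minimal cardinality of a set of real numbers not satisfying Sfin(B_Ω,B_T), and the minimal cardinality of a set of real numbers not satisfying Sfin(Ω,T), both equal 𝔭. -/

import Mathlib

open Set

namespace TauCoverPaper

/-- `a ⊆* b`: `a \ b` is finite. -/
def AlmostSubset (a b : Set ℕ) : Prop := (a \ b).Finite

/-- `Y` is linearly quasiordered by `⊆*`. -/
def LinQuasi (Y : Set (Set ℕ)) : Prop :=
  ∀ a ∈ Y, ∀ b ∈ Y, AlmostSubset a b ∨ AlmostSubset b a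

/-- `a` is a pseudo-intersection of the family `Y`. -/
def PseudoIntersection (a : Set ℕ) (Y : Set (Set ℕ)) : Prop :=
  a.Infinite ∧ ∀ b ∈ Y, AlmostSubset a b

/-- `Y` is centered: every nonempty finite subfamily has infinite intersection. -/
def Centered (Y : Set (Set ℕ)) : Prop :=
  ∀ F : Set (Set ℕ), F ⊆ Y → F.Finite → F.Nonempty → (⋂₀ F).Infinite

/-- A tower: a family of infinite subsets of `ℕ`, linearly quasiordered by `⊆*`,
with no pseudo-intersection. -/
def IsTower (Y : Set (Set ℕ)) : Prop :=
  (∀ a ∈ Y, a.Infinite) ∧ LinQuasi Y ∧ ¬ ∃ a, PseudoIntersection a Y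

variable {α : Type}

/-- A cover of the space `α`: the union is everything, and the whole space is
not a member. -/
def IsCover (𝒰 : Set (Set α)) : Prop := ⋃₀ 𝒰 = univ ∧ univ ∉ 𝒰

/-- A large cover: each point belongs to infinitely many members. -/
def IsLargeCover (𝒰 : Set (Set α)) : Prop :=
  IsCover 𝒰 ∧ ∀ x : α, {U ∈ 𝒰 | x ∈ U}.Infinite

/-- An ω-cover: each finite set is contained in some member. -/
def IsOmegaCover (𝒰 : Set (Set α)) : Prop :=
  IsCover 𝒰 ∧ ∀ F : Set α, F.Finite → ∃ U ∈ 𝒰, F ⊆ U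

/-- A γ-cover: infinite, and each point belongs to all but finitely many members. -/
def IsGammaCover (𝒰 : Set (Set α)) : Prop :=
  IsCover 𝒰 ∧ 𝒰.Infinite ∧ ∀ x : α, {U ∈ 𝒰 | x ∉ U}.Finite

/-- A τ-cover: a large cover such that for all `x, y`, one of the sets
`{U : x ∈ U, y ∉ U}`, `{U : y ∈ U, x ∉ U}` is finite. -/
def IsTauCover (𝒰 : Set (Set α)) : Prop :=
  IsLargeCover 𝒰 ∧ ∀ x y : α,
    {U ∈ 𝒰 | x ∈ U ∧ y ∉ U}.Finite ∨ {U ∈ 𝒰 | y ∈ U ∧ x ∉ U}.Finite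

/-- A τ*-cover: a large, countably infinite cover which, enumerated bijectively
as `⟨Uₙ⟩`, admits for each point `y` an infinite `r y ⊆ {n | y ∈ Uₙ}` such that
the family `{r y}` is linearly quasiordered by `⊆*`. -/
def IsTauStarCover (𝒰 : Set (Set α)) : Prop :=
  IsLargeCover 𝒰 ∧
  ∃ U : ℕ → Set α, Function.Injective U ∧ Set.range U = 𝒰 ∧
    ∃ r : α → Set ℕ,
      (∀ y : α, (r y).Infinite ∧ r y ⊆ {n | y ∈ U n}) ∧
      (∀ y z : α, AlmostSubset (r y) (r z) ∨ AlmostSubset (r z) (r y))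

/-- Ω : countable open ω-covers. -/
def OpenOmega (α : Type) [TopologicalSpace α] : Set (Set (Set α)) :=
  {𝒰 | 𝒰.Countable ∧ (∀ U ∈ 𝒰, IsOpen U) ∧ IsOmegaCover 𝒰}

/-- Γ : countable open γ-covers. -/
def OpenGamma (α : Type) [TopologicalSpace α] : Set (Set (Set α)) :=
  {𝒰 | 𝒰.Countable ∧ (∀ U ∈ 𝒰, IsOpen U) ∧ IsGammaCover 𝒰}

/-- T : countable open τ-covers. -/
def OpenTau (α : Type) [TopologicalSpace α] : Set (Set (Set α)) :=
  {𝒰 | 𝒰.Countable ∧ (∀ U ∈ 𝒰, IsOpen U) ∧ IsTauCover 𝒰}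

/-- T* : countable open τ*-covers. -/
def OpenTauStar (α : Type) [TopologicalSpace α] : Set (Set (Set α)) :=
  {𝒰 | 𝒰.Countable ∧ (∀ U ∈ 𝒰, IsOpen U) ∧ IsTauStarCover 𝒰}

/-- B_Ω : countable Borel ω-covers. -/
def BorelOmega (α : Type) [MeasurableSpace α] : Set (Set (Set α)) :=
  {𝒰 | 𝒰.Countable ∧ (∀ U ∈ 𝒰, MeasurableSet U) ∧ IsOmegaCover 𝒰}

/-- B_Γ : countable Borel γ-covers. -/
def BorelGamma (α : Type) [MeasurableSpace α] : Set (Set (Set α)) :=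
  {𝒰 | 𝒰.Countable ∧ (∀ U ∈ 𝒰, MeasurableSet U) ∧ IsGammaCover 𝒰}

/-- B_T : countable Borel τ-covers. -/
def BorelTau (α : Type) [MeasurableSpace α] : Set (Set (Set α)) :=
  {𝒰 | 𝒰.Countable ∧ (∀ U ∈ 𝒰, MeasurableSet U) ∧ IsTauCover 𝒰}

/-- The selection principle S₁(𝔘,𝔙). -/
def S1 (𝔘 𝔙 : Set (Set (Set α))) : Prop :=
  ∀ 𝒰 : ℕ → Set (Set α), (∀ n, 𝒰 n ∈ 𝔘) →
    ∃ V : ℕ → Set α, (∀ n, V n ∈ 𝒰 n) ∧ Set.range V ∈ 𝔙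

/-- The selection principle Sfin(𝔘,𝔙). -/
def Sfin (𝔘 𝔙 : Set (Set (Set α))) : Prop :=
  ∀ 𝒰 : ℕ → Set (Set α), (∀ n, 𝒰 n ∈ 𝔘) →
    ∃ F : ℕ → Set (Set α), (∀ n, (F n).Finite ∧ F n ⊆ 𝒰 n) ∧ (⋃ n, F n) ∈ 𝔙

/-- The selection principle Ufin(𝔘,𝔙). -/
def Ufin (𝔘 𝔙 : Set (Set (Set α))) : Prop :=
  ∀ 𝒰 : ℕ → Set (Set α), (∀ n, 𝒰 n ∈ 𝔘) →
    (∀ n, ¬ ∃ F : Set (Set α), F ⊆ 𝒰 n ∧ F.Finite ∧ ⋃₀ F = univ) →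
    ∃ F : ℕ → Set (Set α), (∀ n, (F n).Finite ∧ F n ⊆ 𝒰 n) ∧
      Set.range (fun n => ⋃₀ (F n)) ∈ 𝔙

/-- binom(𝔘,𝔙): each member of 𝔘 contains a subfamily belonging to 𝔙. -/
def Binom (𝔘 𝔙 : Set (Set (Set α))) : Prop :=
  ∀ 𝒰 ∈ 𝔘, ∃ 𝒱 ⊆ 𝒰, 𝒱 ∈ 𝔙

/-- Borel measurability of a map into `P(ℕ)` (identified with the Cantor
space via characteristic functions): each coordinate is measurable. -/
def BorelMeasSets {β : Type} [MeasurableSpace β] (f : β → Set ℕ) : Prop :=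
  ∀ n : ℕ, MeasurableSet {x | n ∈ f x}

/-- The excluded middle property for a family `Y ⊆ ℕ^ℕ`. -/
def ExcludedMiddleProp (Y : Set (ℕ → ℕ)) : Prop :=
  ∃ g : ℕ → ℕ,
    (∀ f ∈ Y, {n | f n < g n}.Infinite) ∧
    ∀ f ∈ Y, ∀ h ∈ Y,
      {n | f n < g n ∧ g n ≤ h n}.Finite ∨ {n | h n < g n ∧ g n ≤ f n}.Finite

/-- non(J): the minimal cardinality of a set of reals not satisfying `J`. -/
noncomputable def nonCard (J : Set ℝ → Prop) : Cardinal :=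
  sInf {c : Cardinal | ∃ X : Set ℝ, ¬ J X ∧ Cardinal.mk ↥X = c}

/-- add(J): the minimal cardinality of a family of sets of reals, each
satisfying `J`, whose union does not satisfy `J`. -/
noncomputable def addCard (J : Set ℝ → Prop) : Cardinal :=
  sInf {c : Cardinal | ∃ 𝔉 : Set (Set ℝ),
    (∀ A ∈ 𝔉, J A) ∧ ¬ J (⋃₀ 𝔉) ∧ Cardinal.mk ↥𝔉 = c}

/-- 𝔱 : the minimal cardinality of a tower. -/
noncomputable def towerCard : Cardinal :=
  sInf {c : Cardinal | ∃ Y : Set (Set ℕ), IsTower Y ∧ Cardinal.mk ↥Y = c}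

/-- 𝔭 : the minimal cardinality of a centered family in `[ℕ]^∞` with no
pseudo-intersection. -/
noncomputable def pCard : Cardinal :=
  sInf {c : Cardinal | ∃ Y : Set (Set ℕ), (∀ a ∈ Y, a.Infinite) ∧ Centered Y ∧
    (¬ ∃ a, PseudoIntersection a Y) ∧ Cardinal.mk ↥Y = c}

/-! ### Helper lemmas -/

theorem sInf_eq_of_cofinal (A B : Set Cardinal.{0})
    (h1 : ∀ c ∈ A, ∃ d ∈ B, d ≤ c) (h2 : ∀ c ∈ B, ∃ d ∈ A, d ≤ c) : sInf A = sInf B := by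
  rcases A.eq_empty_or_nonempty with hA | hA
  · have hB : B = ∅ := by
      rw [Set.eq_empty_iff_forall_notMem]
      intro c hc
      obtain ⟨d, hd, _⟩ := h2 c hc
      simp [hA] at hd
    rw [hA, hB]
  · have hB : B.Nonempty := by
      obtain ⟨c, hc⟩ := hA
      obtain ⟨d, hd, _⟩ := h1 c hc
      exact ⟨d, hd⟩
    apply le_antisymm
    · obtain ⟨d, hd, hle⟩ := h2 _ (csInf_mem hB)
      exact (csInf_le' hd).trans hle
    · obtain ⟨d, hd, hle⟩ := h1 _ (csInf_mem hA)
      exact (csInf_le' hd).trans hle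

/-- The property of being a centered family with no pseudo-intersection. -/
def PFam (Y : Set (Set ℕ)) : Prop :=
  (∀ a ∈ Y, a.Infinite) ∧ Centered Y ∧ ¬ ∃ a, PseudoIntersection a Y

/-- Selection of a τ-cover from ω-covers, if there is no small centered family
without pseudo-intersection. -/
theorem exists_selection {β : Type} (𝒰 : ℕ → Set (Set β)) (hc : ∀ n, (𝒰 n).Countable)
    (hω : ∀ n, IsOmegaCover (𝒰 n))
    (hno : ∀ Y : Set (Set ℕ), PFam Y → ¬ Cardinal.mk ↥Y ≤ Cardinal.mk β) :
    ∃ F : ℕ → Set (Set β), (∀ n, (F n).Finite ∧ F n ⊆ 𝒰 n) ∧ IsTauCover (⋃ n, F n) := by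
  have hinf : Infinite β := by
    by_contra hfin
    rw [not_infinite_iff_finite] at hfin
    obtain ⟨U, hU, hsub⟩ := (hω 0).2 univ (Set.toFinite _)
    rw [Set.univ_subset_iff] at hsub
    exact (hω 0).1.2 (hsub ▸ hU)
  have henum : ∀ n, ∃ f : ℕ → Set β, 𝒰 n = Set.range f := by
    intro n
    obtain ⟨U, hU, _⟩ := (hω n).2 ∅ Set.finite_empty
    exact (hc n).exists_eq_range ⟨U, hU⟩
  choose U hU using henum
  have hne : ∀ n m, U n m ≠ univ := by
    intro n m h
    apply (hω n).1.2
    rw [hU n, ← h]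
    exact ⟨m, rfl⟩
  let A : β → Set ℕ := fun x => {k | x ∈ U k.unpair.1 k.unpair.2}
  let D : ℕ → Set ℕ := fun j => {k | j ≤ k.unpair.1}
  let Y : Set (Set ℕ) := Set.range A ∪ Set.range D
  have hcent : Centered Y := by
    intro F hF hfin hFne
    clear hFne
    have key : ∃ S : Set β, S.Finite ∧ ∃ N : ℕ, ∀ k : ℕ,
        S ⊆ U k.unpair.1 k.unpair.2 → N ≤ k.unpair.1 → k ∈ ⋂₀ F := by
      induction F, hfin using Set.Finite.induction_on with
      | empty => exact ⟨∅, Set.finite_empty, 0, by simp⟩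
      | @insert b F _ _ ih =>
        obtain ⟨S, hS, N, hN⟩ := ih ((Set.subset_insert _ _).trans hF)
        have hb : b ∈ Y := hF (Set.mem_insert _ _)
        rcases hb with ⟨x, rfl⟩ | ⟨j, rfl⟩
        · refine ⟨insert x S, hS.insert _, N, ?_⟩
          intro k hk1 hk2
          rw [Set.sInter_insert]
          exact ⟨hk1 (Set.mem_insert _ _), hN k ((Set.subset_insert _ _).trans hk1) hk2⟩
        · refine ⟨S, hS, max N j, ?_⟩
          intro k hk1 hk2
          rw [Set.sInter_insert]
          exact ⟨(le_max_right _ _).trans hk2, hN k hk1 ((le_max_left _ _).trans hk2)⟩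
    obtain ⟨S, hS, N, hN⟩ := key
    have hm : ∀ n, ∃ m, S ⊆ U n m := by
      intro n
      obtain ⟨V, hV, hSV⟩ := (hω n).2 S hS
      rw [hU n] at hV
      obtain ⟨m, rfl⟩ := hV
      exact ⟨m, hSV⟩
    choose m hm using hm
    apply Set.infinite_of_injective_forall_mem (f := fun i => Nat.pair (N + i) (m (N + i)))
    · intro i j hij
      have := congrArg (fun k => (Nat.unpair k).1) hij
      simpa using this
    · intro i
      apply hN
      · simpa using hm (N + i)
      · simp
  have hYinf : ∀ a ∈ Y, a.Infinite := by
    intro a ha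
    have := hcent {a} (by simpa using ha) (Set.finite_singleton _) ⟨a, rfl⟩
    simpa using this
  have hcard : Cardinal.mk ↥Y ≤ Cardinal.mk β := by
    have h0 : Cardinal.aleph0 ≤ Cardinal.mk β := Cardinal.aleph0_le_mk β
    calc Cardinal.mk ↥Y ≤ Cardinal.mk ↥(Set.range A) + Cardinal.mk ↥(Set.range D) :=
          Cardinal.mk_union_le _ _
      _ ≤ Cardinal.mk β + Cardinal.mk ℕ := add_le_add Cardinal.mk_range_le Cardinal.mk_range_le
      _ ≤ Cardinal.mk β := by
          rw [Cardinal.mk_nat]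
          exact (Cardinal.add_eq_left h0 h0).le
  have hPI : ∃ a, PseudoIntersection a Y := by
    by_contra h
    exact hno Y ⟨hYinf, hcent, h⟩ hcard
  obtain ⟨a, hainf, ha⟩ := hPI
  have haA : ∀ x, {k ∈ a | x ∉ U k.unpair.1 k.unpair.2}.Finite := fun x =>
    ha (A x) (Or.inl ⟨x, rfl⟩)
  have haD : ∀ j, {k ∈ a | k.unpair.1 < j}.Finite := by
    intro j
    refine (ha (D j) (Or.inr ⟨j, rfl⟩)).subset ?_
    rintro k ⟨hk, hj⟩
    exact ⟨hk, by simpa [D] using hj⟩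
  let G : ℕ → Set β := fun k => U k.unpair.1 k.unpair.2
  have hun : (⋃ n, G '' {k ∈ a | k.unpair.1 = n}) = G '' a := by
    ext V
    simp only [Set.mem_iUnion, Set.mem_image, Set.mem_ofPred_eq]
    constructor
    · rintro ⟨n, k, ⟨hk, _⟩, rfl⟩
      exact ⟨k, hk, rfl⟩
    · rintro ⟨k, hk, rfl⟩
      exact ⟨_, k, ⟨hk, rfl⟩, rfl⟩
  have hmiss : ∀ x, {V ∈ G '' a | x ∉ V}.Finite := by
    intro x
    refine ((haA x).image G).subset ?_
    rintro _ ⟨⟨k, hk, rfl⟩, hx⟩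
    exact ⟨k, ⟨hk, hx⟩, rfl⟩
  have hGinf : (G '' a).Infinite := by
    intro hfin
    have : (⋃ V ∈ G '' a, {k ∈ a | G k = V}).Finite := by
      refine hfin.biUnion ?_
      rintro _ ⟨k, _, rfl⟩
      have hk : ∃ x, x ∉ G k := by
        by_contra! h
        exact hne _ _ (Set.eq_univ_of_forall h)
      obtain ⟨x, hx⟩ := hk
      refine (haA x).subset ?_
      rintro l ⟨hl, hlk⟩
      refine ⟨hl, ?_⟩
      change x ∉ G l
      rwa [hlk]
    refine hainf (this.subset ?_)
    intro k hk
    simp only [Set.mem_iUnion]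
    exact ⟨G k, ⟨k, hk, rfl⟩, hk, rfl⟩
  have hlarge : ∀ x, {V ∈ G '' a | x ∈ V}.Infinite := by
    intro x hfin
    refine hGinf ((hfin.union (hmiss x)).subset ?_)
    intro V hV
    by_cases hx : x ∈ V
    · exact Or.inl ⟨hV, hx⟩
    · exact Or.inr ⟨hV, hx⟩
  refine ⟨fun n => G '' {k ∈ a | k.unpair.1 = n}, ?_, ?_⟩
  · intro n
    refine ⟨Set.Finite.image _ ((haD (n + 1)).subset ?_), ?_⟩
    · rintro k ⟨hk, hkn⟩
      exact ⟨hk, by omega⟩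
    · rintro _ ⟨k, ⟨_, rfl⟩, rfl⟩
      rw [hU]
      exact ⟨_, rfl⟩
  · rw [hun]
    refine ⟨⟨⟨?_, ?_⟩, hlarge⟩, ?_⟩
    · apply Set.eq_univ_of_forall
      intro x
      obtain ⟨V, hV, hx⟩ := (hlarge x).nonempty
      exact ⟨V, hV, hx⟩
    · rintro ⟨k, _, hk⟩
      exact hne _ _ hk
    · intro x y
      left
      refine (hmiss y).subset ?_
      rintro V ⟨hV, _, hy⟩
      exact ⟨hV, hy⟩

theorem continuous_cantor : Continuous (Cardinal.cantorFunction (1 / 3 : ℝ)) := by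
  unfold Cardinal.cantorFunction
  refine continuous_tsum (u := fun n => (1 / 3 : ℝ) ^ n) ?_ ?_ ?_
  · intro n
    have : (fun f : ℕ → Bool => Cardinal.cantorFunctionAux (1 / 3 : ℝ) f n) =
        (fun b : Bool => cond b ((1 / 3 : ℝ) ^ n) 0) ∘ (fun f : ℕ → Bool => f n) := rfl
    rw [this]
    exact continuous_of_discreteTopology.comp (continuous_apply n)
  · exact summable_geometric_of_lt_one (by norm_num) (by norm_num)
  · intro n f
    unfold Cardinal.cantorFunctionAux
    cases f n <;> simp

theorem exists_embedding : ∃ e : Set ℕ → ℝ, Function.Injective e ∧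
    ∃ O : ℕ → Set ℝ, (∀ n, IsOpen (O n)) ∧ ∀ n s, e s ∈ O n ↔ n ∈ s := by
  classical
  have hinj : Function.Injective (Cardinal.cantorFunction (1 / 3 : ℝ)) :=
    Cardinal.cantorFunction_injective (by norm_num) (by norm_num)
  have hemb := (continuous_cantor.isClosedEmbedding hinj).isEmbedding
  refine ⟨fun s => Cardinal.cantorFunction (1 / 3 : ℝ) (fun n => decide (n ∈ s)), ?_, ?_⟩
  · intro s t h
    have := hinj h
    ext n
    simpa using congrFun this n
  · have hO : ∀ n : ℕ, ∃ O : Set ℝ, IsOpen O ∧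
        Cardinal.cantorFunction (1 / 3 : ℝ) ⁻¹' O = {f : ℕ → Bool | f n = true} := by
      intro n
      have : IsOpen {f : ℕ → Bool | f n = true} := by
        have h : IsOpen ((fun f : ℕ → Bool => f n) ⁻¹' ({true} : Set Bool)) :=
          (isOpen_discrete ({true} : Set Bool)).preimage (continuous_apply n)
        convert h using 1
        ext f
        simp
      exact hemb.isInducing.isOpen_iff.1 this
    choose O hO1 hO2 using hO
    refine ⟨O, hO1, ?_⟩
    intro n s
    have : (fun n => decide (n ∈ s)) ∈ Cardinal.cantorFunction (1 / 3 : ℝ) ⁻¹' O n ↔ n ∈ s := by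
      rw [hO2]; simp
    exact this

/-- Each centered family without a pseudo-intersection yields a set of reals, not larger,
with an open ω-cover which contains no τ-cover. -/
theorem exists_bad_set (Y : Set (Set ℕ)) (hY : PFam Y) :
    ∃ X : Set ℝ, Cardinal.mk ↥X ≤ Cardinal.mk ↥Y ∧
      ∃ 𝒰 ∈ OpenOmega ↥X, ∀ 𝒱 ⊆ 𝒰, ¬ IsTauCover 𝒱 := by
  obtain ⟨hYinf, hcent, hnoPI⟩ := hY
  have hYI : Y.Infinite := by
    intro hfin
    rcases Y.eq_empty_or_nonempty with h | h
    · exact hnoPI ⟨univ, Set.infinite_univ, by simp [h]⟩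
    · refine hnoPI ⟨⋂₀ Y, hcent Y subset_rfl hfin h, ?_⟩
      intro b hb
      have : (⋂₀ Y) \ b = ∅ := Set.sdiff_eq_empty.2 (Set.sInter_subset_of_mem hb)
      unfold AlmostSubset
      rw [this]
      exact Set.finite_empty
  obtain ⟨e, he, O, hO, heO⟩ := exists_embedding
  let M : ↥Y × ↥Y → Set ℕ := fun p => (p.2 : Set ℕ) ∪ (p.1 : Set ℕ)ᶜ
  let C : ℕ → Set ℕ := fun n => {n}ᶜ
  let Z : Set (Set ℕ) := (Y ∪ Set.range M) ∪ Set.range C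
  have hZY : Cardinal.mk ↥Z ≤ Cardinal.mk ↥Y := by
    have h0 : Cardinal.aleph0 ≤ Cardinal.mk ↥Y := by
      have := hYI.to_subtype
      exact Cardinal.aleph0_le_mk _
    calc Cardinal.mk ↥Z ≤ Cardinal.mk ↥(Y ∪ Set.range M) + Cardinal.mk ↥(Set.range C) :=
          Cardinal.mk_union_le _ _
      _ ≤ (Cardinal.mk ↥Y + Cardinal.mk ↥(Set.range M)) + Cardinal.mk ↥(Set.range C) :=
          add_le_add (Cardinal.mk_union_le _ _) le_rfl
      _ ≤ (Cardinal.mk ↥Y + Cardinal.mk (↥Y × ↥Y)) + Cardinal.mk ℕ :=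
          add_le_add (add_le_add le_rfl Cardinal.mk_range_le) Cardinal.mk_range_le
      _ ≤ Cardinal.mk ↥Y := by
          rw [Cardinal.mk_nat, ← Cardinal.mul_def, Cardinal.mul_eq_self h0,
            Cardinal.add_eq_self h0, Cardinal.add_eq_left h0 h0]
  have hZcent : ∀ F : Set (Set ℕ), F ⊆ Z → F.Finite → (⋂₀ F).Infinite := by
    intro F hF hfin
    have key : ∃ E : Set (Set ℕ), E ⊆ Y ∧ E.Finite ∧ ∃ R : Set ℕ, R.Finite ∧
        ⋂₀ E \ R ⊆ ⋂₀ F := by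
      induction F, hfin using Set.Finite.induction_on with
      | empty => exact ⟨∅, by simp, Set.finite_empty, ∅, Set.finite_empty, by simp⟩
      | @insert b F _ _ ih =>
        obtain ⟨E, hE, hEf, R, hR, hsub⟩ := ih ((Set.subset_insert _ _).trans hF)
        have hb : b ∈ Z := hF (Set.mem_insert _ _)
        rcases hb with (hb | ⟨p, rfl⟩) | ⟨n, rfl⟩
        · refine ⟨insert b E, Set.insert_subset hb hE, hEf.insert _, R, hR, ?_⟩
          rw [Set.sInter_insert, Set.sInter_insert]
          rintro k ⟨⟨hk1, hk2⟩, hk3⟩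
          exact ⟨hk1, hsub ⟨hk2, hk3⟩⟩
        · refine ⟨insert (p.2 : Set ℕ) E, Set.insert_subset p.2.2 hE, hEf.insert _, R, hR, ?_⟩
          rw [Set.sInter_insert, Set.sInter_insert]
          rintro k ⟨⟨hk1, hk2⟩, hk3⟩
          exact ⟨Or.inl hk1, hsub ⟨hk2, hk3⟩⟩
        · refine ⟨E, hE, hEf, insert n R, hR.insert _, ?_⟩
          rw [Set.sInter_insert]
          rintro k ⟨hk2, hk3⟩
          rw [Set.mem_insert_iff, not_or] at hk3
          exact ⟨hk3.1, hsub ⟨hk2, hk3.2⟩⟩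
    obtain ⟨E, hE, hEf, R, hR, hsub⟩ := key
    have hEI : (⋂₀ E).Infinite := by
      rcases E.eq_empty_or_nonempty with h | h
      · rw [h, Set.sInter_empty]
        exact Set.infinite_univ
      · exact hcent E hE hEf h
    exact (hEI.sdiff hR).mono hsub
  let X : Set ℝ := e '' Z
  let U : ℕ → Set ↥X := fun n => {x | (x : ℝ) ∈ O n}
  let pt : ∀ z ∈ Z, ↥X := fun z hz => ⟨e z, z, hz, rfl⟩
  have hpt : ∀ z (hz : z ∈ Z) n, pt z hz ∈ U n ↔ n ∈ z := fun z hz n => heO n z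
  have hCZ : ∀ n, C n ∈ Z := fun n => Or.inr ⟨n, rfl⟩
  have hUinj : Function.Injective U := by
    intro n m h
    by_contra hnm
    have h1 : pt (C n) (hCZ n) ∈ U m := (hpt _ (hCZ n) _).2 (fun h => hnm h.symm)
    rw [← h, hpt _ (hCZ n)] at h1
    exact h1 rfl
  have hUne : ∀ n, U n ≠ univ := by
    intro n h
    have h1 : pt (C n) (hCZ n) ∈ U n := by rw [h]; trivial
    rw [hpt _ (hCZ n)] at h1
    exact h1 rfl
  have hUω : ∀ F : Set ↥X, F.Finite → ∃ V ∈ Set.range U, F ⊆ V := by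
    intro F hF
    have hF' : {z ∈ Z | e z ∈ Subtype.val '' F}.Finite := by
      refine (Set.Finite.preimage he.injOn (hF.image Subtype.val)).subset ?_
      rintro z ⟨_, hz⟩
      exact hz
    obtain ⟨n, hn⟩ := (hZcent _ (fun z hz => hz.1) hF').nonempty
    refine ⟨U n, ⟨n, rfl⟩, ?_⟩
    rintro ⟨_, z, hz, rfl⟩ hx
    exact (heO n z).2 (hn z ⟨hz, _, hx, rfl⟩)
  refine ⟨X, Cardinal.mk_image_le.trans hZY, Set.range U, ⟨Set.countable_range U, ?_, ?_⟩, ?_⟩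
  · rintro _ ⟨n, rfl⟩
    exact (hO n).preimage continuous_subtype_val
  · refine ⟨⟨?_, ?_⟩, hUω⟩
    · apply Set.eq_univ_of_forall
      intro x
      obtain ⟨V, hV, hx⟩ := hUω {x} (Set.finite_singleton x)
      exact ⟨V, hV, hx rfl⟩
    · rintro ⟨n, hn⟩
      exact hUne n hn
  · intro 𝒱 h𝒱 hτ
    let a : Set ℕ := U ⁻¹' 𝒱
    have h1 : ∀ z ∈ Z, (a ∩ z).Infinite := by
      intro z hz hfin
      refine hτ.1.2 (pt z hz) ((hfin.image U).subset ?_)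
      rintro V ⟨hV, hx⟩
      obtain ⟨n, rfl⟩ := h𝒱 hV
      exact ⟨n, ⟨hV, (hpt z hz n).1 hx⟩, rfl⟩
    have h2 : ∀ z (hz : z ∈ Z) w (hw : w ∈ Z),
        {V ∈ 𝒱 | pt z hz ∈ V ∧ pt w hw ∉ V}.Finite → ((a ∩ z) \ w).Finite := by
      intro z hz w hw hfin
      refine (hfin.preimage hUinj.injOn).subset ?_
      rintro n ⟨⟨hn, hnz⟩, hnw⟩
      exact ⟨hn, (hpt z hz n).2 hnz, fun h => hnw ((hpt w hw n).1 h)⟩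
    have h3 : ∀ z ∈ Z, ∀ w ∈ Z, ((a ∩ z) \ w).Finite ∨ ((a ∩ w) \ z).Finite := by
      intro z hz w hw
      rcases hτ.2 (pt z hz) (pt w hw) with h | h
      · exact Or.inl (h2 z hz w hw h)
      · exact Or.inr (h2 w hw z hz h)
    have hYZ : ∀ b ∈ Y, b ∈ Z := fun b hb => Or.inl (Or.inl hb)
    have h4 : ∀ b ∈ Y, ∀ c ∈ Y, ((a ∩ b) \ c).Finite ∨ (a \ b).Finite := by
      intro b hb c hc
      have hM : c ∪ bᶜ ∈ Z := Or.inl (Or.inr ⟨(⟨b, hb⟩, ⟨c, hc⟩), rfl⟩)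
      rcases h3 b (hYZ b hb) _ hM with h | h
      · left
        refine h.subset ?_
        rintro k ⟨⟨h1, h2⟩, h3⟩
        refine ⟨⟨h1, h2⟩, ?_⟩
        rintro (h | h)
        · exact h3 h
        · exact h h2
      · right
        refine h.subset ?_
        rintro k ⟨h1, h2⟩
        exact ⟨⟨h1, Or.inr h2⟩, h2⟩
    by_cases hall : ∀ b ∈ Y, (a \ b).Finite
    · refine hnoPI ⟨a, ?_, hall⟩
      obtain ⟨b, hb⟩ := hYI.nonempty
      exact (h1 b (hYZ b hb)).mono Set.inter_subset_left
    · push Not at hall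
      obtain ⟨b, hb, hab⟩ := hall
      refine hnoPI ⟨a ∩ b, h1 b (hYZ b hb), fun c hc => ?_⟩
      exact (h4 b hb c hc).resolve_right hab

/-- non(Sfin(B_Ω,B_T)) = non(Sfin(Ω,T)) = 𝔭. -/
theorem statement14 :
    nonCard (fun X : Set ℝ => Sfin (BorelOmega ↥X) (BorelTau ↥X)) = pCard ∧
    nonCard (fun X : Set ℝ => Sfin (OpenOmega ↥X) (OpenTau ↥X)) = pCard := by
  constructor
  · unfold nonCard pCard
    apply sInf_eq_of_cofinal
    · rintro _ ⟨X, hX, rfl⟩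
      by_contra hcon
      apply hX
      intro 𝒰 h𝒰
      obtain ⟨F, hF, hτ⟩ := exists_selection 𝒰 (fun n => (h𝒰 n).1) (fun n => (h𝒰 n).2.2)
        (fun Y hY hle => hcon ⟨_, ⟨Y, hY.1, hY.2.1, hY.2.2, rfl⟩, hle⟩)
      refine ⟨F, hF, Set.countable_iUnion fun n => (hF n).1.countable, ?_, hτ⟩
      intro V hV
      obtain ⟨n, hn⟩ := Set.mem_iUnion.1 hV
      exact (h𝒰 n).2.1 V ((hF n).2 hn)
    · rintro _ ⟨Y, h1, h2, h3, rfl⟩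
      obtain ⟨X, hle, 𝒰, h𝒰, hbad⟩ := exists_bad_set Y ⟨h1, h2, h3⟩
      refine ⟨_, ⟨X, ?_, rfl⟩, hle⟩
      intro hS
      obtain ⟨F, hF, hτ⟩ := hS (fun _ => 𝒰)
        (fun _ => ⟨h𝒰.1, fun V hV => (h𝒰.2.1 V hV).measurableSet, h𝒰.2.2⟩)
      exact hbad _ (Set.iUnion_subset fun n => (hF n).2) hτ.2.2
  · unfold nonCard pCard
    apply sInf_eq_of_cofinal
    · rintro _ ⟨X, hX, rfl⟩
      by_contra hcon
      apply hX
      intro 𝒰 h𝒰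
      obtain ⟨F, hF, hτ⟩ := exists_selection 𝒰 (fun n => (h𝒰 n).1) (fun n => (h𝒰 n).2.2)
        (fun Y hY hle => hcon ⟨_, ⟨Y, hY.1, hY.2.1, hY.2.2, rfl⟩, hle⟩)
      refine ⟨F, hF, Set.countable_iUnion fun n => (hF n).1.countable, ?_, hτ⟩
      intro V hV
      obtain ⟨n, hn⟩ := Set.mem_iUnion.1 hV
      exact (h𝒰 n).2.1 V ((hF n).2 hn)
    · rintro _ ⟨Y, h1, h2, h3, rfl⟩
      obtain ⟨X, hle, 𝒰, h𝒰, hbad⟩ := exists_bad_set Y ⟨h1, h2, h3⟩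
      refine ⟨_, ⟨X, ?_, rfl⟩, hle⟩
      intro hS
      obtain ⟨F, hF, hτ⟩ := hS (fun _ => 𝒰) (fun _ => h𝒰)
      exact hbad _ (Set.iUnion_subset fun n => (hF n).2) hτ.2.2

end TauCoverPaper
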